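/- Let (A_n) be a sequence of pairwise disjoint measurable subsets of [0,1] with μ(A_n) > 0, and define T: L_1[0,1] → L_q[0,1] (1 < q < ∞) by Tf = Σ_{n=1}^∞ (∫_{A_n} f dμ) r_n, where r_n is the n-th Rademacher function. Then T is a bounded linear operator, T is not compact (the normalized indicators μ(A_n)^{-1} χ_{A_n} are mapped to r_n, which has no convergent subsequence in L_q), and T is strictly singular. -/

import Mathlib

open MeasureTheory ENNReal Filter Set

/-- Lebesgue measure on `[0,1]`. -/
noncomputable def μ01 : Measure ℝ := volume.restrict (Set.Icc 0 1)

instance : Fact (volume (Set.Icc (0:ℝ) 1) < ∞) := ⟨by simp⟩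
instance : IsFiniteMeasure μ01 := ⟨by simp [μ01]⟩

/-- The `n`-th Rademacher function `r_n(t) = sign (sin (2^n π t))`. -/
noncomputable def rademacher (n : ℕ) (t : ℝ) : ℝ :=
  Real.sign (Real.sin (2 ^ n * Real.pi * t))

/-- An operator is strictly singular if it is bounded below on no infinite-dimensional
closed subspace. -/
def StrictlySingular {E F : Type*} [NormedAddCommGroup E] [NormedSpace ℝ E]
    [NormedAddCommGroup F] [NormedSpace ℝ F] (T : E →L[ℝ] F) : Prop :=
  ∀ Y : Submodule ℝ E, IsClosed (Y : Set E) → ¬ FiniteDimensional ℝ Y →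
    ¬ ∃ c : ℝ, 0 < c ∧ ∀ y ∈ Y, c * ‖y‖ ≤ ‖T y‖

/-!
The operator factors as `L¹ → ℓ¹ → Lᵖ`, where `f` goes to its integrals over the sets `A n` and `a`
to `J a = ∑ n, a n • r n`. Since `a n = ∫ r n * J a`, each coordinate of `a` is controlled by the
norm of `J a`, so the images of distinct normalized indicators stay apart.

For the strict singularity of `J`, suppose `|r n| ≤ C` for all `n`. Then `|J a| ≤ C ‖a‖₁` and
`∫ |J a| ≤ ‖J a‖₂ = ‖a‖₂`, whence `‖J a‖ₚ ^ p ≤ (C ‖a‖₁) ^ (p - 1) * ‖a‖₂`. On the other hand, an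
infinite-dimensional space of null sequences contains vectors with all coordinates at most `2` in
absolute value and arbitrarily many at least `1`. For these `‖a‖₂ ^ 2 ≤ 2 ‖a‖₁` with `‖a‖₁`
arbitrarily large, so that no bound `c ‖a‖₁ ≤ ‖J a‖ₚ` with `c > 0` survives.
-/

open Function Topology
open scoped NNReal lp

section StrictlySingular

variable {E F G : Type*} [NormedAddCommGroup E] [NormedSpace ℝ E] [NormedAddCommGroup F]
  [NormedSpace ℝ F] [NormedAddCommGroup G] [NormedSpace ℝ G]

theorem StrictlySingular.comp {T : F →L[ℝ] G} (hT : StrictlySingular T) (S : E →L[ℝ] F) :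
    StrictlySingular (T ∘L S) := by
  rintro Y - hY ⟨c, hc, hcY⟩
  set Z : Submodule ℝ F := (Y.map S.toLinearMap).topologicalClosure
  have hSZ : ∀ y ∈ Y, S.toLinearMap y ∈ Z := fun y hy =>
    subset_closure (Submodule.mem_map_of_mem hy)
  have hinj : Injective (S.toLinearMap.restrict hSZ) := by
    rw [← LinearMap.ker_eq_bot, LinearMap.ker_eq_bot']
    rintro ⟨y, hy⟩ hSy
    have hSy' : S y = 0 := congrArg Subtype.val hSy
    have hcy : c * ‖y‖ ≤ 0 := by simpa [hSy'] using hcY y hy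
    simpa using nonpos_of_mul_nonpos_right hcy hc
  refine hT Z (Submodule.isClosed_topologicalClosure _)
    (fun _ => hY (FiniteDimensional.of_injective _ hinj)) ⟨c / (‖S‖ + 1), by positivity, ?_⟩
  have hclosed : IsClosed {z : F | c / (‖S‖ + 1) * ‖z‖ ≤ ‖T z‖} :=
    isClosed_le (by fun_prop) (by fun_prop)
  refine fun z hz => closure_minimal ?_ hclosed hz
  rintro _ ⟨y, hy, rfl⟩
  calc c / (‖S‖ + 1) * ‖S y‖ ≤ c / (‖S‖ + 1) * ((‖S‖ + 1) * ‖y‖) := by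
        gcongr
        exact (S.le_opNorm y).trans (by gcongr; linarith)
    _ = c * ‖y‖ := by field_simp
    _ ≤ ‖T (S y)‖ := hcY y hy

theorem not_isCompactOperator_of_pairwise_le_norm_sub {ι : Type*} [Infinite ι] (T : E →L[ℝ] F)
    {x : ι → E} {R δ : ℝ} (hδ : 0 < δ) (hx : ∀ i, ‖x i‖ ≤ R)
    (hsep : Pairwise fun i j => δ ≤ ‖T (x i) - T (x j)‖) : ¬ IsCompactOperator T := by
  intro hT
  obtain ⟨K, hK, hTK⟩ := hT.image_closedBall_subset_compact (f := T.toLinearMap) R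
  obtain ⟨s, -, hs, hKs⟩ := Metric.finite_approx_of_totallyBounded hK.totallyBounded (δ / 2)
    (half_pos hδ)
  have hcover : ∀ i, ∃ y : s, dist (T (x i)) y < δ / 2 := fun i => by
    simpa using hKs (hTK ⟨x i, by simpa using hx i, rfl⟩)
  choose y hy using hcover
  have := hs.to_subtype
  obtain ⟨i, j, hij, hyij⟩ := Finite.exists_ne_map_eq_of_infinite y
  have hdist : dist (T (x i)) (T (x j)) < δ := by
    have hj := hy j
    rw [← hyij] at hj
    linarith [hy i, dist_triangle_right (T (x i)) (T (x j)) (y i)]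
  exact (hsep hij).not_gt (dist_eq_norm (T (x i)) (T (x j)) ▸ hdist)

end StrictlySingular

section SequenceSpaces

variable {ι : Type*}

theorem exists_mem_ne_zero_forall_apply_eq_zero {𝕜 : Type*} [Field 𝕜] {Y : Submodule 𝕜 (ι → 𝕜)}
    (hY : ¬ FiniteDimensional 𝕜 Y) (s : Finset ι) : ∃ z ∈ Y, z ≠ 0 ∧ ∀ n ∈ s, z n = 0 := by
  by_contra! h
  refine hY (FiniteDimensional.of_injective
    (LinearMap.funLeft 𝕜 𝕜 ((↑) : s → ι) ∘ₗ Y.subtype) ?_)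
  rw [← LinearMap.ker_eq_bot, LinearMap.ker_eq_bot']
  rintro ⟨z, hz⟩ hzs
  by_contra hz0
  obtain ⟨n, hn, hzn⟩ := h z hz (by simpa using hz0)
  exact hzn (congrFun hzs ⟨n, hn⟩)

theorem exists_pos_forall_abs_apply_le {z : ι → ℝ} (hz : Tendsto z cofinite (𝓝 0)) (hz0 : z ≠ 0) :
    ∃ m, 0 < |z m| ∧ ∀ n, |z n| ≤ |z m| := by
  obtain ⟨k, hk⟩ := Function.ne_iff.mp hz0
  have hfin : {n | |z k| ≤ |z n|}.Finite := by
    have hlt : ∀ᶠ n in cofinite, |z n| < |z k| := by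
      simpa using hz.abs.eventually_lt_const (by simpa using hk)
    simpa [eventually_cofinite] using hlt
  obtain ⟨m, hm, hmax⟩ := exists_max_image _ (fun n => |z n|) hfin ⟨k, le_refl |z k|⟩
  refine ⟨m, (abs_pos.mpr hk).trans_le hm, fun n => ?_⟩
  rcases le_total (|z k|) (|z n|) with h | h
  exacts [hmax n h, h.trans hm]

theorem exists_mem_abs_le_two_one_le_abs {Y : Submodule ℝ (ι → ℝ)}
    (hY : ¬ FiniteDimensional ℝ Y) (hY0 : ∀ a ∈ Y, Tendsto a cofinite (𝓝 0)) (k : ℕ) :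
    ∃ a ∈ Y, (∀ n, |a n| ≤ 2) ∧ ∃ s : Finset ι, s.card = k ∧ ∀ n ∈ s, 1 ≤ |a n| := by
  classical
  induction k with
  | zero => exact ⟨0, Y.zero_mem, by simp, ∅, by simp⟩
  | succ k ih =>
    obtain ⟨a, haY, ha2, s, hsk, hs1⟩ := ih
    have hfin : {n | ¬ |a n| < 1}.Finite := by
      have := (hY0 a haY).abs
      rw [abs_zero] at this
      exact this.eventually_lt_const one_pos
    obtain ⟨z, hzY, hz0, hzs⟩ := exists_mem_ne_zero_forall_apply_eq_zero hY hfin.toFinset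
    obtain ⟨m, hm, hzm⟩ := exists_pos_forall_abs_apply_le (hY0 z hzY) hz0
    have hz_eq : ∀ n, 1 ≤ |a n| → z n = 0 := fun n hn => hzs n (by simpa using hn)
    have ham : |a m| < 1 := by
      by_contra! h
      simp [hz_eq m h] at hm
    -- `ε * z m = ±1` is given the sign of `a m`, so that the two do not cancel
    obtain ⟨ε, hε, hεm⟩ : ∃ ε : ℝ, |ε| = |z m|⁻¹ ∧ 1 ≤ |a m + ε * z m| := by
      have hzm0 : z m ≠ 0 := abs_pos.mp hm
      rcases le_total 0 (a m) with h | h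
      · refine ⟨(z m)⁻¹, abs_inv _, ?_⟩
        rw [inv_mul_cancel₀ hzm0]
        exact le_abs.mpr (.inl (by linarith))
      · refine ⟨-(z m)⁻¹, by rw [abs_neg, abs_inv], ?_⟩
        rw [neg_mul, inv_mul_cancel₀ hzm0]
        exact le_abs.mpr (.inr (by linarith))
    refine ⟨a + ε • z, Y.add_mem haY (Y.smul_mem ε hzY), fun n => ?_, insert m s, ?_, ?_⟩
    · change |a n + ε * z n| ≤ 2
      rcases lt_or_ge (|a n|) 1 with hn | hn
      · have hεn : |ε * z n| ≤ 1 := by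
          rw [abs_mul, hε]
          exact (inv_mul_le_one₀ hm).mpr (hzm n)
        linarith [abs_add_le (a n) (ε * z n)]
      · simpa [hz_eq n hn] using ha2 n
    · rw [Finset.card_insert_of_notMem (fun h => ham.not_ge (hs1 m h)), hsk]
    · intro n hn
      rcases Finset.mem_insert.mp hn with rfl | hn
      · exact hεm
      · simpa [hz_eq n (hs1 n hn)] using hs1 n hn

theorem hasSum_abs_apply (a : ℓ^1(ι, ℝ)) : HasSum (fun n => |a n|) ‖a‖ := by
  simpa using lp.hasSum_norm (p := 1) (by simp) a

theorem exists_mem_lp_one_abs_le_two_le_norm {Y : Submodule ℝ ℓ^1(ι, ℝ)}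
    (hY : ¬ FiniteDimensional ℝ Y) (k : ℕ) : ∃ a ∈ Y, (∀ n, |a n| ≤ 2) ∧ k ≤ ‖a‖ := by
  let coe : ℓ^1(ι, ℝ) →ₗ[ℝ] ι → ℝ := LinearMap.pi fun n => lp.evalₗ (fun _ => ℝ) 1 n
  have hcoe : Injective coe := fun a b hab => lp.ext hab
  have hcoeY : ¬ FiniteDimensional ℝ (Y.map coe) := fun _ =>
    hY (LinearEquiv.finiteDimensional (Y.equivMapOfInjective coe hcoe).symm)
  have hcoeY0 : ∀ a ∈ Y.map coe, Tendsto a cofinite (𝓝 0) := by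
    rintro _ ⟨a, -, rfl⟩
    exact (hasSum_abs_apply a).summable.of_abs.tendsto_cofinite_zero
  obtain ⟨_, ⟨a, haY, rfl⟩, ha2, s, hsk, hs1⟩ := exists_mem_abs_le_two_one_le_abs hcoeY hcoeY0 k
  refine ⟨a, haY, ha2, ?_⟩
  calc (k : ℝ) = ∑ _n ∈ s, 1 := by simp [hsk]
    _ ≤ ∑ n ∈ s, |a n| := Finset.sum_le_sum hs1
    _ ≤ ‖a‖ := sum_le_hasSum s (fun n _ => abs_nonneg (a n)) (hasSum_abs_apply a)

end SequenceSpaces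

section Moments

variable {Ω : Type*} [MeasurableSpace Ω] {μ : Measure Ω}

theorem integral_norm_le_norm_Lp {E : Type*} [NormedAddCommGroup E] {p : ℝ≥0∞} [Fact (1 ≤ p)]
    [IsProbabilityMeasure μ] (f : Lp E p μ) : ∫ t, ‖f t‖ ∂μ ≤ ‖f‖ := by
  rw [integral_norm_eq_lintegral_enorm (Lp.aestronglyMeasurable f),
    ← eLpNorm_one_eq_lintegral_enorm, Lp.norm_def]
  exact ENNReal.toReal_mono (Lp.eLpNorm_ne_top f)
    (eLpNorm_le_eLpNorm_of_exponent_le Fact.out (Lp.aestronglyMeasurable f))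

theorem sq_integral_le_integral_sq [IsProbabilityMeasure μ] {f : Ω → ℝ} (hf : MemLp f 2 μ) :
    (∫ t, f t ∂μ) ^ 2 ≤ ∫ t, f t ^ 2 ∂μ := by
  have hvar : 0 ≤ ProbabilityTheory.variance f μ := ProbabilityTheory.variance_nonneg f μ
  rw [ProbabilityTheory.variance_eq_sub hf] at hvar
  simpa using hvar

theorem norm_Lp_rpow_eq_integral {E : Type*} [NormedAddCommGroup E] {p : ℝ≥0∞} (hp0 : p ≠ 0)
    (hp : p ≠ ∞) (f : Lp E p μ) : ‖f‖ ^ p.toReal = ∫ t, ‖f t‖ ^ p.toReal ∂μ := by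
  have hp' : p.toReal ≠ 0 := (ENNReal.toReal_pos hp0 hp).ne'
  rw [Lp.norm_def, (Lp.memLp f).eLpNorm_eq_integral_rpow_norm hp0 hp,
    ENNReal.toReal_ofReal (by positivity), Real.rpow_inv_rpow (by positivity) hp']

end Moments

section Synthesis

variable {ι Ω : Type*} [MeasurableSpace Ω] {μ : Measure Ω} {r : ι → Ω → ℝ} {C : ℝ≥0}

/-- A family of random variables bounded by a common constant `C`. The bound is asked everywhere,
so that `synthesis` is defined by a pointwise convergent series. -/
structure IsUniformlyBounded (r : ι → Ω → ℝ) (C : ℝ≥0) (μ : Measure Ω) : Prop where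
  aestronglyMeasurable : ∀ n, AEStronglyMeasurable (r n) μ
  abs_le : ∀ n t, |r n t| ≤ C

/-- The synthesis of a function from its coefficients `a` along the family `r`, as a pointwise
sum. -/
noncomputable def synthesis (r : ι → Ω → ℝ) (a : ι → ℝ) (t : Ω) : ℝ := ∑' n, a n * r n t

namespace IsUniformlyBounded

theorem abs_mul_le (hr : IsUniformlyBounded r C μ) (a : ι → ℝ) (n : ι) (t : Ω) :
    |a n * r n t| ≤ C * |a n| := by
  rw [abs_mul, mul_comm]
  exact mul_le_mul_of_nonneg_right (hr.abs_le n t) (abs_nonneg _)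

theorem hasSum_synthesis (hr : IsUniformlyBounded r C μ) (a : ℓ^1(ι, ℝ)) (t : Ω) :
    HasSum (fun n => a n * r n t) (synthesis r a t) :=
  (((hasSum_abs_apply a).summable.mul_left (C : ℝ)).of_norm_bounded
    fun n => hr.abs_mul_le a n t).hasSum

theorem abs_synthesis_le (hr : IsUniformlyBounded r C μ) (a : ℓ^1(ι, ℝ)) (t : Ω) :
    |synthesis r a t| ≤ C * ‖a‖ :=
  (hr.hasSum_synthesis a t).norm_le_of_bounded ((hasSum_abs_apply a).mul_left (C : ℝ))
    fun n => hr.abs_mul_le a n t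

theorem aestronglyMeasurable_synthesis [Countable ι] (hr : IsUniformlyBounded r C μ)
    (a : ℓ^1(ι, ℝ)) : AEStronglyMeasurable (synthesis r a) μ :=
  aestronglyMeasurable_of_tendsto_ae atTop
    (fun s => Finset.aestronglyMeasurable_fun_sum s fun n _ =>
      (hr.aestronglyMeasurable n).const_mul (a n))
    (Eventually.of_forall fun t => hr.hasSum_synthesis a t)

theorem memLp_synthesis [Countable ι] [IsFiniteMeasure μ] (hr : IsUniformlyBounded r C μ)
    (a : ℓ^1(ι, ℝ)) (p : ℝ≥0∞) : MemLp (synthesis r a) p μ :=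
  .of_bound (hr.aestronglyMeasurable_synthesis a) _ (Eventually.of_forall (hr.abs_synthesis_le a))

/-- The operator from `ℓ¹` to `Lᵖ` mapping the unit vectors to the members of a uniformly bounded
family. -/
noncomputable def synthesisCLM [Countable ι] [IsFiniteMeasure μ] (hr : IsUniformlyBounded r C μ)
    (p : ℝ≥0∞) [Fact (1 ≤ p)] : ℓ^1(ι, ℝ) →L[ℝ] Lp ℝ p μ :=
  LinearMap.mkContinuous
    { toFun := fun a => (hr.memLp_synthesis a p).toLp
      map_add' := fun a b => by
        rw [← MemLp.toLp_add]
        congr 1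
        ext t
        simpa [synthesis, add_mul] using
          ((hr.hasSum_synthesis a t).add (hr.hasSum_synthesis b t)).tsum_eq
      map_smul' := fun c a => by
        rw [RingHom.id_apply, ← MemLp.toLp_const_smul]
        congr 1
        ext t
        simpa [synthesis, mul_assoc] using ((hr.hasSum_synthesis a t).mul_left c).tsum_eq }
    (measureUnivNNReal μ ^ p.toReal⁻¹ * C) fun a => by
      rw [mul_assoc]
      refine Lp.norm_le_of_ae_bound (by positivity) ?_
      filter_upwards [(hr.memLp_synthesis a p).coeFn_toLp] with t ht
      exact (congrArg norm ht).trans_le (hr.abs_synthesis_le a t)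

theorem coeFn_synthesisCLM [Countable ι] [IsFiniteMeasure μ] (hr : IsUniformlyBounded r C μ)
    (p : ℝ≥0∞) [Fact (1 ≤ p)] (a : ℓ^1(ι, ℝ)) : hr.synthesisCLM p a =ᵐ[μ] synthesis r a :=
  (hr.memLp_synthesis a p).coeFn_toLp

theorem integral_synthesis_mul [Countable ι] (hr : IsUniformlyBounded r C μ)
    (a : ℓ^1(ι, ℝ)) {h : Ω → ℝ} (hh : Integrable h μ) :
    ∫ t, synthesis r a t * h t ∂μ = ∑' n, a n * ∫ t, r n t * h t ∂μ := by
  have hint : ∀ n, Integrable (fun t => r n t * h t) μ := fun n =>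
    hh.bdd_mul (hr.aestronglyMeasurable n) (Eventually.of_forall (hr.abs_le n))
  have hnorm : ∀ n, ∫ t, ‖a n * (r n t * h t)‖ ∂μ ≤ |a n| * (C * ∫ t, |h t| ∂μ) := fun n => by
    rw [← integral_const_mul, ← integral_const_mul]
    refine integral_mono ((hint n).const_mul (a n)).norm ((hh.abs.const_mul _).const_mul _)
      fun t => ?_
    simp only [norm_mul, Real.norm_eq_abs]
    gcongr
    exact hr.abs_le n t
  have hsum := hasSum_integral_of_summable_integral_norm (fun n => (hint n).const_mul (a n))
    (.of_nonneg_of_le (fun n => integral_nonneg fun t => norm_nonneg _) hnorm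
      ((hasSum_abs_apply a).summable.mul_right _))
  simp_rw [integral_const_mul] at hsum
  rw [hsum.tsum_eq]
  refine integral_congr_ae (Eventually.of_forall fun t => ?_)
  simpa [mul_assoc] using ((hr.hasSum_synthesis a t).mul_right (h t)).tsum_eq.symm

theorem integral_abs_synthesis_rpow_le [Countable ι] [IsFiniteMeasure μ]
    (hr : IsUniformlyBounded r C μ) (a : ℓ^1(ι, ℝ)) {q : ℝ} (hq : 1 ≤ q) :
    ∫ t, |synthesis r a t| ^ q ∂μ ≤ (C * ‖a‖) ^ (q - 1) * ∫ t, |synthesis r a t| ∂μ := by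
  have hbound : ∀ t, |synthesis r a t| ^ q ≤ (C * ‖a‖) ^ (q - 1) * |synthesis r a t| := fun t =>
    calc |synthesis r a t| ^ q = |synthesis r a t| ^ (q - 1) * |synthesis r a t| := by
          rw [← Real.rpow_add_one' (abs_nonneg _) (by linarith), sub_add_cancel]
      _ ≤ (C * ‖a‖) ^ (q - 1) * |synthesis r a t| := by
          gcongr
          exact hr.abs_synthesis_le a t
  rw [← integral_const_mul]
  refine integral_mono_of_nonneg (Eventually.of_forall fun t => by positivity)
    (((hr.memLp_synthesis a 1).integrable le_rfl).abs.const_mul _) (Eventually.of_forall hbound)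

end IsUniformlyBounded

/-- A uniformly bounded orthonormal system in `L²(μ)`, such as the Rademacher functions or the
trigonometric system. -/
structure IsUniformlyBoundedOrthonormal (r : ι → Ω → ℝ) (C : ℝ≥0) (μ : Measure Ω) : Prop
    extends IsUniformlyBounded r C μ where
  integral_mul_self : ∀ n, ∫ t, r n t * r n t ∂μ = 1
  integral_mul_of_ne : Pairwise fun n m => ∫ t, r n t * r m t ∂μ = 0

namespace IsUniformlyBoundedOrthonormal

variable [Countable ι]

section FiniteMeasure

variable [IsFiniteMeasure μ]

theorem integral_synthesis_mul_apply (hr : IsUniformlyBoundedOrthonormal r C μ) (a : ℓ^1(ι, ℝ))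
    (n : ι) : ∫ t, synthesis r a t * r n t ∂μ = a n := by
  have hrn : Integrable (r n) μ :=
    .of_bound (hr.aestronglyMeasurable n) C (Eventually.of_forall (hr.abs_le n))
  rw [hr.integral_synthesis_mul a hrn, tsum_eq_single n fun m hm => by
    rw [hr.integral_mul_of_ne hm, mul_zero], hr.integral_mul_self, mul_one]

theorem integral_synthesis_sq (hr : IsUniformlyBoundedOrthonormal r C μ) (a : ℓ^1(ι, ℝ)) :
    ∫ t, synthesis r a t ^ 2 ∂μ = ∑' n, a n ^ 2 := by
  simp_rw [sq]
  rw [hr.integral_synthesis_mul a ((hr.memLp_synthesis a 1).integrable le_rfl)]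
  refine tsum_congr fun n => ?_
  simp_rw [mul_comm (r n _), hr.integral_synthesis_mul_apply]

theorem abs_apply_le_integral (hr : IsUniformlyBoundedOrthonormal r C μ) (a : ℓ^1(ι, ℝ)) (n : ι) :
    |a n| ≤ C * ∫ t, |synthesis r a t| ∂μ := by
  have hint := (hr.memLp_synthesis a 1).integrable le_rfl
  have hbound : ∀ t, ‖synthesis r a t * r n t‖ ≤ C * |synthesis r a t| := fun t => by
    rw [norm_mul, mul_comm]
    exact mul_le_mul_of_nonneg_right (hr.abs_le n t) (abs_nonneg _)
  calc |a n| = ‖∫ t, synthesis r a t * r n t ∂μ‖ := by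
        rw [hr.integral_synthesis_mul_apply, Real.norm_eq_abs]
    _ ≤ ∫ t, C * |synthesis r a t| ∂μ :=
        norm_integral_le_of_norm_le (hint.abs.const_mul _) (Eventually.of_forall hbound)
    _ = C * ∫ t, |synthesis r a t| ∂μ := integral_const_mul _ _

end FiniteMeasure

variable [IsProbabilityMeasure μ] {p : ℝ≥0∞} [Fact (1 ≤ p)]

theorem sq_integral_abs_synthesis_le (hr : IsUniformlyBoundedOrthonormal r C μ) (a : ℓ^1(ι, ℝ))
    {δ : ℝ} (hδ : ∀ n, |a n| ≤ δ) : (∫ t, |synthesis r a t| ∂μ) ^ 2 ≤ δ * ‖a‖ := by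
  have hsq : ∀ n, a n ^ 2 ≤ δ * |a n| := fun n => by
    rw [← sq_abs, sq]
    exact mul_le_mul_of_nonneg_right (hδ n) (abs_nonneg _)
  have hsum := (hasSum_abs_apply a).mul_left δ
  calc (∫ t, |synthesis r a t| ∂μ) ^ 2 ≤ ∫ t, |synthesis r a t| ^ 2 ∂μ :=
        sq_integral_le_integral_sq (hr.memLp_synthesis a 2).abs
    _ = ∑' n, a n ^ 2 := by simp_rw [sq_abs, hr.integral_synthesis_sq]
    _ ≤ δ * ‖a‖ := hasSum_le hsq
        (Summable.of_nonneg_of_le (fun n => sq_nonneg _) hsq hsum.summable).hasSum hsum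

theorem abs_apply_le_norm_synthesisCLM (hr : IsUniformlyBoundedOrthonormal r C μ) (a : ℓ^1(ι, ℝ))
    (n : ι) : |a n| ≤ C * ‖hr.synthesisCLM p a‖ := by
  refine (hr.abs_apply_le_integral a n).trans ?_
  gcongr
  refine le_trans (integral_congr_ae ?_).le (integral_norm_le_norm_Lp (hr.synthesisCLM p a))
  filter_upwards [hr.coeFn_synthesisCLM p a] with t ht
  rw [ht, Real.norm_eq_abs]

theorem norm_synthesisCLM_rpow_le (hr : IsUniformlyBoundedOrthonormal r C μ) (hp : p ≠ ∞)
    (a : ℓ^1(ι, ℝ)) {δ : ℝ} (hδ : ∀ n, |a n| ≤ δ) :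
    ‖hr.synthesisCLM p a‖ ^ p.toReal ≤ (C * ‖a‖) ^ (p.toReal - 1) * √(δ * ‖a‖) := by
  have hp1 : 1 ≤ p.toReal := ENNReal.toReal_one ▸ ENNReal.toReal_mono hp Fact.out
  calc ‖hr.synthesisCLM p a‖ ^ p.toReal = ∫ t, |synthesis r a t| ^ p.toReal ∂μ := by
        rw [norm_Lp_rpow_eq_integral (zero_lt_one.trans_le Fact.out).ne' hp]
        refine integral_congr_ae ?_
        filter_upwards [hr.coeFn_synthesisCLM p a] with t ht
        rw [ht, Real.norm_eq_abs]
    _ ≤ (C * ‖a‖) ^ (p.toReal - 1) * ∫ t, |synthesis r a t| ∂μ :=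
        hr.integral_abs_synthesis_rpow_le a hp1
    _ ≤ (C * ‖a‖) ^ (p.toReal - 1) * √(δ * ‖a‖) := by
        gcongr
        exact Real.le_sqrt_of_sq_le (hr.sq_integral_abs_synthesis_le a hδ)

theorem strictlySingular_synthesisCLM (hr : IsUniformlyBoundedOrthonormal r C μ) (hp : p ≠ ∞) :
    StrictlySingular (hr.synthesisCLM p) := by
  rintro Y - hY ⟨c, hc, hcY⟩
  set q := p.toReal
  set M : ℝ := C ^ (q - 1) / c ^ q with hM
  obtain ⟨k, hk⟩ := exists_nat_gt (2 * M ^ 2)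
  obtain ⟨a, haY, ha2, hka⟩ := exists_mem_lp_one_abs_le_two_le_norm hY k
  have ha : 0 < ‖a‖ := (by positivity : 0 ≤ 2 * M ^ 2).trans_lt (hk.trans_le hka)
  have hlower : c ^ q * ‖a‖ ^ q ≤ (C * ‖a‖) ^ (q - 1) * √(2 * ‖a‖) := by
    rw [← Real.mul_rpow hc.le ha.le]
    exact (Real.rpow_le_rpow (by positivity) (hcY a haY) ENNReal.toReal_nonneg).trans
      (hr.norm_synthesisCLM_rpow_le hp a ha2)
  have hsqrt : ‖a‖ ≤ M * √(2 * ‖a‖) := by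
    have hcq : 0 < c ^ q := Real.rpow_pos_of_pos hc q
    have haq : 0 < ‖a‖ ^ (q - 1) := Real.rpow_pos_of_pos ha _
    rw [Real.mul_rpow C.coe_nonneg ha.le, ← sub_add_cancel q 1, Real.rpow_add_one ha.ne',
      sub_add_cancel] at hlower
    rw [hM, div_mul_eq_mul_div, le_div_iff₀ hcq]
    refine le_of_mul_le_mul_left ?_ haq
    linarith
  have hsq : ‖a‖ * ‖a‖ ≤ 2 * M ^ 2 * ‖a‖ := by
    calc ‖a‖ * ‖a‖ ≤ (M * √(2 * ‖a‖)) * (M * √(2 * ‖a‖)) := mul_self_le_mul_self ha.le hsqrt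
      _ = 2 * M ^ 2 * ‖a‖ := by
        rw [mul_mul_mul_comm, Real.mul_self_sqrt (by positivity)]
        ring
  exact (le_of_mul_le_mul_right hsq ha).not_gt (hk.trans_le hka)

theorem one_le_mul_norm_synthesisCLM_single_sub [DecidableEq ι]
    (hr : IsUniformlyBoundedOrthonormal r C μ) {i j : ι} (hij : i ≠ j) :
    1 ≤ C * ‖hr.synthesisCLM p (lp.single 1 i 1) - hr.synthesisCLM p (lp.single 1 j 1)‖ := by
  set a : ℓ^1(ι, ℝ) := lp.single 1 i 1 - lp.single 1 j 1 with ha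
  have hai : a i = 1 := by
    rw [ha, lp.coeFn_sub, Pi.sub_apply, lp.single_apply_self,
      lp.single_apply_ne _ _ _ hij, sub_zero]
  rw [← map_sub, ← ha]
  simpa [hai] using hr.abs_apply_le_norm_synthesisCLM (p := p) a i

end IsUniformlyBoundedOrthonormal

end Synthesis

section SetIntegral

variable {ι Ω : Type*} [MeasurableSpace Ω] {ν : Measure Ω} {A : ι → Set Ω}

theorem hasSum_setIntegral_norm [Countable ι] (hA : ∀ n, MeasurableSet (A n))
    (hdisj : Pairwise (Disjoint on A)) (f : Lp ℝ 1 ν) :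
    HasSum (fun n => ∫ x in A n, ‖f x‖ ∂ν) (∫ x in ⋃ n, A n, ‖f x‖ ∂ν) :=
  hasSum_integral_iUnion hA hdisj (L1.integrable_coeFn f).norm.integrableOn

theorem memℓp_setIntegral [Countable ι] (hA : ∀ n, MeasurableSet (A n))
    (hdisj : Pairwise (Disjoint on A)) (f : Lp ℝ 1 ν) :
    Memℓp (fun n => ∫ x in A n, f x ∂ν) 1 := by
  refine memℓp_gen ?_
  simp only [ENNReal.toReal_one, Real.rpow_one]
  exact .of_nonneg_of_le (fun n => norm_nonneg _) (fun n => norm_integral_le_integral_norm _)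
    (hasSum_setIntegral_norm hA hdisj f).summable

theorem norm_mk_setIntegral_le [Countable ι] (hA : ∀ n, MeasurableSet (A n))
    (hdisj : Pairwise (Disjoint on A)) (f : Lp ℝ 1 ν) :
    ‖(⟨fun n => ∫ x in A n, f x ∂ν, memℓp_setIntegral hA hdisj f⟩ : ℓ^1(ι, ℝ))‖ ≤ ‖f‖ := by
  set a : ℓ^1(ι, ℝ) := ⟨fun n => ∫ x in A n, f x ∂ν, memℓp_setIntegral hA hdisj f⟩
  have hle : ∀ n, |a n| ≤ ∫ x in A n, ‖f x‖ ∂ν := fun n =>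
    norm_integral_le_integral_norm (fun x => f x)
  calc ‖a‖ ≤ ∫ x in ⋃ n, A n, ‖f x‖ ∂ν :=
        hasSum_le hle (hasSum_abs_apply a) (hasSum_setIntegral_norm hA hdisj f)
    _ ≤ ∫ x, ‖f x‖ ∂ν := setIntegral_le_integral (L1.integrable_coeFn f).norm
        (Eventually.of_forall fun x => norm_nonneg _)
    _ = ‖f‖ := (L1.norm_eq_integral_norm f).symm

/-- The operator from `L¹` to `ℓ¹` mapping a function to its integrals over the members of a
disjoint family of sets. -/
noncomputable def setIntegralCLM [Countable ι] (hA : ∀ n, MeasurableSet (A n))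
    (hdisj : Pairwise (Disjoint on A)) : Lp ℝ 1 ν →L[ℝ] ℓ^1(ι, ℝ) :=
  LinearMap.mkContinuous
    { toFun := fun f => ⟨fun n => ∫ x in A n, f x ∂ν, memℓp_setIntegral hA hdisj f⟩
      map_add' := fun f g => by
        ext n
        change ∫ x in A n, (f + g) x ∂ν = (∫ x in A n, f x ∂ν) + ∫ x in A n, g x ∂ν
        rw [← integral_add (L1.integrable_coeFn f).integrableOn
          (L1.integrable_coeFn g).integrableOn]
        exact integral_congr_ae (ae_restrict_of_ae (Lp.coeFn_add f g))
      map_smul' := fun c f => by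
        ext n
        change ∫ x in A n, (c • f) x ∂ν = c * ∫ x in A n, f x ∂ν
        rw [← integral_const_mul]
        exact integral_congr_ae (ae_restrict_of_ae (Lp.coeFn_smul c f)) }
    1 fun f => (norm_mk_setIntegral_le hA hdisj f).trans_eq (one_mul _).symm

theorem setIntegralCLM_apply [Countable ι] (hA : ∀ n, MeasurableSet (A n))
    (hdisj : Pairwise (Disjoint on A)) (f : Lp ℝ 1 ν) (n : ι) :
    setIntegralCLM hA hdisj f n = ∫ x in A n, f x ∂ν := rfl

theorem norm_indicatorConstLp_inv_measure {s : Set Ω} (hs : MeasurableSet s) (hs0 : ν s ≠ 0)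
    (hs' : ν s ≠ ∞) : ‖indicatorConstLp 1 hs hs' (ν.real s)⁻¹‖ = 1 := by
  have hpos : 0 < ν.real s := ENNReal.toReal_pos hs0 hs'
  rw [norm_indicatorConstLp one_ne_zero ENNReal.one_ne_top]
  simp [abs_of_pos hpos, hpos.ne']

theorem setIntegralCLM_indicatorConstLp [Countable ι] [DecidableEq ι]
    (hA : ∀ n, MeasurableSet (A n)) (hdisj : Pairwise (Disjoint on A)) {k : ι} (hk0 : ν (A k) ≠ 0)
    (hk : ν (A k) ≠ ∞) :
    setIntegralCLM hA hdisj (indicatorConstLp 1 (hA k) hk (ν.real (A k))⁻¹) = lp.single 1 k 1 := by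
  ext n
  rw [setIntegralCLM_apply, setIntegral_indicatorConstLp (hA n), lp.single_apply]
  rcases eq_or_ne n k with rfl | hn
  · have hpos : 0 < ν.real (A n) := ENNReal.toReal_pos hk0 hk
    simp [hpos.ne']
  · simp [(hdisj hn.symm).inter_eq, hn]

end SetIntegral

section Rademacher

theorem abs_rademacher_le_one (n : ℕ) (t : ℝ) : |rademacher n t| ≤ 1 := by
  rcases Real.sign_apply_eq (Real.sin (2 ^ n * Real.pi * t)) with h | h | h <;>
    simp [rademacher, h]

theorem measurable_real_sign : Measurable Real.sign :=
  Measurable.ite measurableSet_Iio measurable_const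
    (Measurable.ite measurableSet_Ioi measurable_const measurable_const)

theorem measurable_rademacher (n : ℕ) : Measurable (rademacher n) :=
  measurable_real_sign.comp (by fun_prop)

theorem rademacher_antiperiodic (n : ℕ) : Antiperiodic (rademacher n) (2 ^ n)⁻¹ := fun t => by
  have hshift : (2 : ℝ) ^ n * Real.pi * (t + (2 ^ n)⁻¹) = 2 ^ n * Real.pi * t + Real.pi := by
    field_simp
  rw [rademacher, hshift, Real.sin_add_pi, Real.sign_neg, rademacher]

theorem rademacher_periodic {n m : ℕ} (hnm : n < m) : Periodic (rademacher m) (2 ^ n)⁻¹ := by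
  obtain ⟨k, rfl⟩ := Nat.exists_eq_add_of_lt hnm
  intro t
  have hshift : (2 : ℝ) ^ (n + k + 1) * Real.pi * (t + (2 ^ n)⁻¹)
      = 2 ^ (n + k + 1) * Real.pi * t + (2 ^ k : ℕ) * (2 * Real.pi) := by
    push_cast [pow_succ, pow_add]
    field_simp
  rw [rademacher, hshift, Real.sin_add_nat_mul_two_pi, rademacher]

theorem intervalIntegral_eq_zero_of_antiperiodic_of_periodic {f : ℝ → ℝ} {c T : ℝ}
    (hc : Antiperiodic f c) (hT : Periodic f T) : ∫ t in 0..T, f t = 0 := by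
  have hneg : ∫ t in 0..T, f t = -∫ t in 0..T, f t :=
    calc ∫ t in 0..T, f t = ∫ t in c..c + T, f t := by
          simpa using hT.intervalIntegral_add_eq 0 c
      _ = ∫ t in 0..T, f (t + c) := by
          rw [intervalIntegral.integral_comp_add_right, zero_add, add_comm]
      _ = -∫ t in 0..T, f t := by simp_rw [hc _, intervalIntegral.integral_neg]
  linarith

theorem integral_μ01_eq_intervalIntegral (f : ℝ → ℝ) : ∫ t, f t ∂μ01 = ∫ t in 0..1, f t := by
  rw [μ01, integral_Icc_eq_integral_Ioc, intervalIntegral.integral_of_le zero_le_one]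

theorem integral_rademacher_mul_of_lt {n m : ℕ} (hn : n ≠ 0) (hnm : n < m) :
    ∫ t, rademacher n t * rademacher m t ∂μ01 = 0 := by
  have hperiodic : ∀ k ≠ 0, Periodic (rademacher k) 1 := fun k hk => by
    simpa using rademacher_periodic (Nat.pos_of_ne_zero hk)
  rw [integral_μ01_eq_intervalIntegral]
  refine intervalIntegral_eq_zero_of_antiperiodic_of_periodic (c := (2 ^ n)⁻¹) (fun t => ?_)
    ((hperiodic n hn).mul (hperiodic m (by omega)))
  rw [rademacher_antiperiodic n t, rademacher_periodic hnm t, neg_mul]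

theorem rademacher_mul_self_ae (n : ℕ) : ∀ᵐ t, rademacher n t * rademacher n t = 1 := by
  have hcount : (range fun k : ℤ => (k : ℝ) / 2 ^ n).Countable := countable_range _
  filter_upwards [hcount.ae_notMem volume] with t ht
  have hsin : Real.sin (2 ^ n * Real.pi * t) ≠ 0 := by
    rintro h0
    obtain ⟨k, hk⟩ := Real.sin_eq_zero_iff.mp h0
    have hkt : (k : ℝ) = t * 2 ^ n := mul_right_cancel₀ Real.pi_ne_zero (by linarith)
    exact ht ⟨k, (div_eq_iff (by positivity)).mpr hkt⟩
  rcases Real.sign_apply_eq_of_ne_zero _ hsin with h | h <;> simp [rademacher, h]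

instance : IsProbabilityMeasure μ01 := ⟨by simp [μ01]⟩

theorem isUniformlyBoundedOrthonormal_rademacher :
    IsUniformlyBoundedOrthonormal (fun n => rademacher (n + 1)) 1 μ01 where
  aestronglyMeasurable n := (measurable_rademacher _).aestronglyMeasurable
  abs_le n t := by simpa using abs_rademacher_le_one (n + 1) t
  integral_mul_self n := by
    have hae : ∀ᵐ t ∂μ01, rademacher (n + 1) t * rademacher (n + 1) t = 1 :=
      ae_restrict_of_ae (rademacher_mul_self_ae (n + 1))
    simp [integral_congr_ae hae]
  integral_mul_of_ne n m hnm := by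
    rcases hnm.lt_or_gt with h | h
    · exact integral_rademacher_mul_of_lt n.succ_ne_zero (Nat.succ_lt_succ h)
    · simp_rw [mul_comm (rademacher (n + 1) _)]
      exact integral_rademacher_mul_of_lt m.succ_ne_zero (Nat.succ_lt_succ h)

end Rademacher

theorem statement18_general {ι Ω Ω' : Type*} [Countable ι] [Infinite ι] [MeasurableSpace Ω]
    [MeasurableSpace Ω'] {ν : Measure Ω} {μ : Measure Ω'} [IsProbabilityMeasure μ]
    {r : ι → Ω' → ℝ} {C : ℝ≥0} (hr : IsUniformlyBoundedOrthonormal r C μ) {p : ℝ≥0∞}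
    [Fact (1 ≤ p)] (hp : p ≠ ∞) {A : ι → Set Ω} (hA : ∀ n, MeasurableSet (A n))
    (hdisj : Pairwise (Disjoint on A)) (hpos : ∀ n, ν (A n) ≠ 0) (hfin : ∀ n, ν (A n) ≠ ∞) :
    ∃ T : Lp ℝ 1 ν →L[ℝ] Lp ℝ p μ,
      (∀ f : Lp ℝ 1 ν, ∀ᵐ t ∂μ, T f t = ∑' n, (∫ x in A n, f x ∂ν) * r n t) ∧
      ¬ IsCompactOperator T ∧ StrictlySingular T := by
  classical
  set S := setIntegralCLM (ν := ν) hA hdisj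
  set J := hr.synthesisCLM p
  set x : ι → Lp ℝ 1 ν := fun n => indicatorConstLp 1 (hA n) (hfin n) (ν.real (A n))⁻¹
  have hx : ∀ n, ‖x n‖ ≤ 1 := fun n =>
    (norm_indicatorConstLp_inv_measure (hA n) (hpos n) (hfin n)).le
  have hsep : ∀ i j, i ≠ j → 1 ≤ C * ‖(J ∘L S) (x i) - (J ∘L S) (x j)‖ := fun i j hij => by
    simpa [S, x, setIntegralCLM_indicatorConstLp hA hdisj (hpos _) (hfin _)] using
      hr.one_le_mul_norm_synthesisCLM_single_sub (p := p) hij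
  have hC : 0 < (C : ℝ) := by
    obtain ⟨i, j, hij⟩ := exists_pair_ne ι
    exact pos_of_mul_pos_left (one_pos.trans_le (hsep i j hij)) (norm_nonneg _)
  refine ⟨J ∘L S, fun f => hr.coeFn_synthesisCLM p (S f), ?_,
    (hr.strictlySingular_synthesisCLM hp).comp S⟩
  exact not_isCompactOperator_of_pairwise_le_norm_sub (J ∘L S) (inv_pos.mpr hC) hx
    fun i j hij => (inv_le_iff_one_le_mul₀' hC).mpr (hsep i j hij)

/-- Let `(A n)` be pairwise disjoint measurable subsets of `[0,1]` of
positive measure and `1 < q < ∞`. The operator `T : L_1 → L_q` defined by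
`T f = ∑ n (∫_{A n} f dμ) r_{n+1}` (with `r_n` the Rademacher functions) is a bounded
linear operator which is not compact and is strictly singular. -/
theorem statement18 (q : ℝ) (hq1 : 1 < q) [Fact (1 ≤ ENNReal.ofReal q)]
    (A : ℕ → Set ℝ) (hAmeas : ∀ n, MeasurableSet (A n))
    (hAsub : ∀ n, A n ⊆ Set.Icc (0:ℝ) 1)
    (hAdisj : Pairwise fun i j => Disjoint (A i) (A j))
    (hApos : ∀ n, 0 < μ01 (A n)) :
    ∃ T : Lp ℝ 1 μ01 →L[ℝ] Lp ℝ (ENNReal.ofReal q) μ01,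
      (∀ f : Lp ℝ 1 μ01, ∀ᵐ t ∂μ01,
        (T f : ℝ → ℝ) t = ∑' n, (∫ x in A n, f x ∂μ01) * rademacher (n + 1) t) ∧
      ¬ IsCompactOperator (⇑T) ∧
      StrictlySingular T := by
  exact statement18_general isUniformlyBoundedOrthonormal_rademacher ENNReal.ofReal_ne_top hAmeas
    hAdisj (fun n => (hApos n).ne') fun n => measure_ne_top μ01 (A n)
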